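/- Let (w_n)_{n∈ℤ} and (v_n)_{n∈ℤ} be sequences of complex numbers with |w_n| = |v_n| = 1 for all n, let (d_n)_{n∈ℤ} be a bounded sequence of complex numbers with XT₁ ≠ T₀X, and let T = T(w_n, v_n, d_n) be the associated bounded block-shift operator on H ⊕ H. Suppose there exist a bijection g : ℤ → ℤ and N ∈ ℤ such that the numbers |d_{n+1}v_n − d_n w_n|², n > N, are pairwise distinct, and |d_{n+1}v_n − d_n w_n|² = |d_{g(n)+1}v_{g(n)} − d_{g(n)}w_{g(n)}|² for every n ∈ ℤ. If for every n ∈ ℤ at least one of the following holds, where c_n = conj(d_n)·conj(w_n)·v_n: (1) d_{n+1}c_n + d_n c_{n−1} − d_{n+1}·conj(w_n)·v_n·c_{n−1} is not a real number; (2) (conj(d_{n+1})·w_n·v_n − conj(d_n))·|d_n v_{n−1} − d_{n−1}w_{n−1}|² ≠ (conj(d_{n−1})·conj(w_{n−1})·v_{n−1} − conj(d_n))·|d_{n+1}v_n − d_n w_n|²; then T is irreducible and weakly homogeneous. -/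

import Mathlib

noncomputable section

open Complex Metric

/-- `ℓ²(ℤ)` over `ℂ`. -/
abbrev Hl : Type := lp (fun _ : ℤ => ℂ) 2

/-- The standard orthonormal basis of `ℓ²(ℤ)`. -/
def eb (n : ℤ) : Hl := lp.single 2 n 1

/-- The Hilbert space direct sum `H ⊕ H`. -/
abbrev H2 : Type := WithLp 2 (Hl × Hl)

/-- A bounded operator on a Hilbert space is irreducible if the only closed subspaces
invariant under both it and its adjoint are `⊥` and `⊤`. -/
def IsIrreducibleOp {E : Type*} [NormedAddCommGroup E] [InnerProductSpace ℂ E] [CompleteSpace E]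
    (A : E →L[ℂ] E) : Prop :=
  ∀ K : Submodule ℂ E, IsClosed (K : Set E) →
    (∀ x ∈ K, A x ∈ K) → (∀ x ∈ K, ContinuousLinearMap.adjoint A x ∈ K) →
    K = ⊥ ∨ K = ⊤

/-- The block operator `(x, y) ↦ (T₀ x + (X T₁ − T₀ X) y, T₁ y)` on the Hilbert space
direct sum `H₀ ⊕ H₁`. -/
def blockT2 {H0 H1 : Type*} [NormedAddCommGroup H0] [NormedSpace ℂ H0]
    [NormedAddCommGroup H1] [NormedSpace ℂ H1]
    (T0 : H0 →L[ℂ] H0) (T1 : H1 →L[ℂ] H1) (X : H1 →L[ℂ] H0) :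
    WithLp 2 (H0 × H1) →L[ℂ] WithLp 2 (H0 × H1) :=
  let E := WithLp.prodContinuousLinearEquiv 2 ℂ H0 H1
  (E.symm.toContinuousLinearMap).comp
    ((((T0.comp (ContinuousLinearMap.fst ℂ H0 H1)) +
        ((X.comp T1 - T0.comp X).comp (ContinuousLinearMap.snd ℂ H0 H1))).prod
      (T1.comp (ContinuousLinearMap.snd ℂ H0 H1))).comp E.toContinuousLinearMap)

/-- The block operator `T(wₙ, vₙ, dₙ)` on `ℓ²(ℤ) ⊕ ℓ²(ℤ)`. -/
def blockT (T0 T1 X : Hl →L[ℂ] Hl) : H2 →L[ℂ] H2 := blockT2 T0 T1 X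
/-- The action of the Möbius map `z ↦ e^{iθ}(z − a)/(1 − conj(a) z)` on an operator:
`φ(A) = e^{iθ}(A − a)(I − conj(a)A)⁻¹`. -/
def mobiusOp {E : Type*} [NormedAddCommGroup E] [NormedSpace ℂ E]
    (θ : ℝ) (a : ℂ) (A : E →L[ℂ] E) : E →L[ℂ] E :=
  Complex.exp (θ * Complex.I) •
    ((A - a • (1 : E →L[ℂ] E)) * Ring.inverse (1 - (starRingEnd ℂ) a • A))

/-- Two bounded operators are similar if they are intertwined by a bounded
invertible operator. -/
def SimilarOp {E : Type*} [NormedAddCommGroup E] [NormedSpace ℂ E]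
    (A B : E →L[ℂ] E) : Prop :=
  ∃ S : (E →L[ℂ] E)ˣ, (S : E →L[ℂ] E) * A = B * (S : E →L[ℂ] E)

/-- A bounded operator is weakly homogeneous if its spectrum is contained in the closed
unit disc and `φ(A)` is similar to `A` for every Möbius map `φ`. -/
def WeaklyHomogeneousOp {E : Type*} [NormedAddCommGroup E] [NormedSpace ℂ E]
    (A : E →L[ℂ] E) : Prop :=
  spectrum ℂ A ⊆ closedBall (0 : ℂ) 1 ∧
    ∀ (θ : ℝ) (a : ℂ), ‖a‖ < 1 → SimilarOp (mobiusOp θ a A) A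
/-- `|d_{n+1} vₙ − dₙ wₙ|²`, the quantity determining the singular values of `Tₙ`. -/
def sqSeq (w v d : ℤ → ℂ) (n : ℤ) : ℝ := ‖d (n + 1) * v n - d n * w n‖ ^ 2

/-- `cₙ = conj(dₙ)·conj(wₙ)·vₙ`. -/
def cSeq' (w v d : ℤ → ℂ) (n : ℤ) : ℂ :=
  starRingEnd ℂ (d n) * starRingEnd ℂ (w n) * v n

/-! The shear `(x, y) ↦ (x + X y, y)` conjugates `T₀ ⊕ T₁` to `T`, and weak homogeneity passes to
direct sums and to conjugates, so it is enough that each `Tᵢ` is weakly homogeneous. With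
unimodular weights `Tᵢ` is a unitary bilateral shift of multiplicity one. If `e` generates such a
shift `U`, then `(1 − conj(a) U)⁻¹ e` generates `φ(U)`: the two operators have the same closed
invariant subspaces. Any two bilateral shifts of multiplicity one are unitarily equivalent.

For irreducibility, regard `T` as a block shift whose weights are upper triangular `2 × 2`
matrices `Tₙ` with `|det Tₙ| = 1` and `tr Tₙ*Tₙ = 2 + |d_{n+1}vₙ − dₙwₙ|²`. The blocks `P_{ij}` of
a projection commuting with `T` intertwine `Tᵢ*Tᵢ` and `Tⱼ*Tⱼ`, two matrices of determinant `1`,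
so `P_{ij} = 0` when their traces differ. Since `P_{i+1,j+1} Tⱼ = Tᵢ P_{ij}`, every off-diagonal
block vanishes as soon as one block on each off-diagonal does, which holds because the traces are
not periodic. A diagonal block commutes with both `T_{n+1}*T_{n+1}` and `TₙTₙ*`; for some `n`
these do not commute with each other, and then the block is a scalar, the same one for all
diagonal blocks.
-/

section Mobius

variable {R S : Type*} [Ring R] [Algebra ℂ R] [Ring S] [Algebra ℂ S]

/-- The value at `x` of the Möbius map `z ↦ e^{iθ}(z − a)/(1 − conj(a) z)`, in an arbitrary complex
algebra, so that it can be transported along algebra homomorphisms. It is only meaningful when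
`1 − conj(a) x` is a unit. -/
def mobius (θ : ℝ) (a : ℂ) (x : R) : R :=
  exp (θ * I) • ((x - a • (1 : R)) * Ring.inverse (1 - (starRingEnd ℂ) a • x))

/-- Weak homogeneity of an element of a complex algebra; for the algebra of bounded operators this
is `WeaklyHomogeneousOp`. -/
def IsWeaklyHomogeneous (x : R) : Prop :=
  spectrum ℂ x ⊆ closedBall 0 1 ∧ ∀ (θ : ℝ) (a : ℂ), ‖a‖ < 1 → IsConj (mobius θ a x) x

theorem weaklyHomogeneousOp_iff {E : Type*} [NormedAddCommGroup E] [NormedSpace ℂ E]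
    {A : E →L[ℂ] E} : WeaklyHomogeneousOp A ↔ IsWeaklyHomogeneous A :=
  Iff.rfl

theorem isUnit_one_sub_smul {x : R} {a : ℂ} (hx : spectrum ℂ x ⊆ closedBall 0 1) (ha : ‖a‖ < 1) :
    IsUnit (1 - a • x) := by
  rcases eq_or_ne a 0 with rfl | ha0
  · simp
  have hmem : a⁻¹ ∉ spectrum ℂ x := fun h => by
    have := mem_closedBall_zero_iff.1 (hx h)
    rw [norm_inv, inv_le_one₀ (norm_pos_iff.2 ha0)] at this
    exact ha.not_ge this
  have hfactor : 1 - a • x = a • (algebraMap ℂ R a⁻¹ - x) := by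
    rw [smul_sub, Algebra.algebraMap_eq_smul_one, smul_inv_smul₀ ha0]
  rw [hfactor]
  exact (spectrum.notMem_iff.1 hmem).smul (Units.mk0 a ha0)

theorem isUnit_one_sub_conj_smul {x : R} {a : ℂ} (hx : spectrum ℂ x ⊆ closedBall 0 1)
    (ha : ‖a‖ < 1) : IsUnit (1 - (starRingEnd ℂ) a • x) :=
  isUnit_one_sub_smul hx (by rwa [RCLike.norm_conj])

theorem map_ringInverse (f : R →ₐ[ℂ] S) {x : R} (hx : IsUnit x) :
    f (Ring.inverse x) = Ring.inverse (f x) := by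
  obtain ⟨u, rfl⟩ := hx
  rw [Ring.inverse_unit]
  exact (Ring.inverse_unit (Units.map (f : R →* S) u)).symm

theorem map_mobius (f : R →ₐ[ℂ] S) {θ : ℝ} {a : ℂ} {x : R}
    (h : IsUnit (1 - (starRingEnd ℂ) a • x)) : f (mobius θ a x) = mobius θ a (f x) := by
  simp [mobius, map_ringInverse f h]

theorem mobius_eq_iff {θ : ℝ} {a : ℂ} {x y : R} (h : IsUnit (1 - (starRingEnd ℂ) a • x)) :
    mobius θ a x = y ↔ exp (θ * I) • (x - a • (1 : R)) = y * (1 - (starRingEnd ℂ) a • x) := by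
  rw [eq_comm, mobius, ← smul_mul_assoc, Ring.eq_mul_inverse_iff_mul_eq _ _ _ h, eq_comm]

theorem mobius_neg_mobius {θ : ℝ} {a : ℂ} {x : R} (ha : ‖a‖ < 1)
    (h : IsUnit (1 - (starRingEnd ℂ) a • x)) :
    mobius (-θ) (-(exp (θ * I) * a)) (mobius θ a x) = x := by
  have hy := ((mobius_eq_iff (θ := θ) h).1 rfl).symm
  obtain ⟨Q, hQ⟩ := h
  rw [← hQ] at hy
  set y := mobius θ a x
  set e := exp (θ * I) with he
  have hconj : (starRingEnd ℂ) (-(e * a)) * e = -(starRingEnd ℂ) a := by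
    rw [map_neg, map_mul, neg_mul, mul_right_comm, conj_mul', norm_exp_ofReal_mul_I, ofReal_one,
      one_pow, one_mul]
  have hinv : exp (↑(-θ) * I) * e = 1 := by
    rw [he, ← Complex.exp_add, ofReal_neg, neg_mul, neg_add_cancel, Complex.exp_zero]
  have hc : 1 - (starRingEnd ℂ) a * a ≠ 0 := by
    rw [conj_mul', sub_ne_zero]
    exact_mod_cast (pow_lt_one₀ (norm_nonneg a) ha two_ne_zero).ne'
  have hnum : (y - -(e * a) • 1) * ↑Q = (e * (1 - (starRingEnd ℂ) a * a)) • x := by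
    rw [sub_mul, hy, smul_mul_assoc, one_mul, hQ]
    module
  have hden : (1 - (starRingEnd ℂ) (-(e * a)) • y) * ↑Q =
      (1 - (starRingEnd ℂ) a * a) • (1 : R) := by
    rw [sub_mul, smul_mul_assoc, hy, one_mul, hQ, smul_smul, hconj]
    module
  have hunit : IsUnit (1 - (starRingEnd ℂ) (-(e * a)) • y) := by
    rw [← Units.isUnit_mul_units _ Q, hden]
    exact isUnit_one.smul (Units.mk0 _ hc)
  rw [mobius_eq_iff hunit, ← Q.mul_left_inj, smul_mul_assoc, hnum, mul_assoc, hden, smul_smul,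
    ← mul_assoc, hinv, one_mul, mul_smul_comm, mul_one]

namespace IsWeaklyHomogeneous

variable {x : R} {y : S}

theorem map (hx : IsWeaklyHomogeneous x) (f : R →ₐ[ℂ] S) : IsWeaklyHomogeneous (f x) := by
  refine ⟨(AlgHom.spectrum_apply_subset f x).trans hx.1, fun θ a ha => ?_⟩
  rw [← map_mobius f (isUnit_one_sub_conj_smul hx.1 ha)]
  exact (f : R →* S).map_isConj (hx.2 θ a ha)

theorem prodMk (hx : IsWeaklyHomogeneous x) (hy : IsWeaklyHomogeneous y) :
    IsWeaklyHomogeneous (x, y) := by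
  have hspec : spectrum ℂ (x, y) ⊆ closedBall 0 1 := by
    rw [Prod.spectrum_eq]
    exact Set.union_subset hx.1 hy.1
  refine ⟨hspec, fun θ a ha => ?_⟩
  have hunit := isUnit_one_sub_conj_smul hspec ha
  have hmobius : mobius θ a (x, y) = (mobius θ a x, mobius θ a y) :=
    Prod.ext (map_mobius (AlgHom.fst ℂ R S) hunit) (map_mobius (AlgHom.snd ℂ R S) hunit)
  rw [hmobius]
  obtain ⟨u, hu⟩ := hx.2 θ a ha
  obtain ⟨v, hv⟩ := hy.2 θ a ha
  exact ⟨MulEquiv.prodUnits.symm (u, v), Prod.ext hu hv⟩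

theorem of_isConj {y : R} (hx : IsWeaklyHomogeneous x) (hxy : IsConj x y) :
    IsWeaklyHomogeneous y := by
  obtain ⟨u, hu⟩ := hxy
  have hy : MulSemiringAction.toAlgHom ℂ R (ConjAct.toConjAct u) x = y := by
    simp [ConjAct.units_smul_def, hu.eq]
  exact hy ▸ hx.map _

end IsWeaklyHomogeneous

end Mobius

section BlockOperator

variable {H0 H1 : Type*} [NormedAddCommGroup H0] [NormedSpace ℂ H0] [NormedAddCommGroup H1]
  [NormedSpace ℂ H1]

/-- The direct sum `(x, y) ↦ (A x, B y)` of bounded operators, as an algebra homomorphism. -/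
def directSumAlgHom (H0 H1 : Type*) [NormedAddCommGroup H0] [NormedSpace ℂ H0]
    [NormedAddCommGroup H1] [NormedSpace ℂ H1] :
    (H0 →L[ℂ] H0) × (H1 →L[ℂ] H1) →ₐ[ℂ] (WithLp 2 (H0 × H1) →L[ℂ] WithLp 2 (H0 × H1)) :=
  let E := WithLp.prodContinuousLinearEquiv 2 ℂ H0 H1
  AlgHom.ofLinearMap
    { toFun := fun T => E.symm.conjContinuousAlgEquiv (T.1.prodMap T.2)
      map_add' := fun _ _ => rfl
      map_smul' := fun _ _ => rfl }
    rfl fun _ _ => rfl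

theorem directSumAlgHom_apply (T : (H0 →L[ℂ] H0) × (H1 →L[ℂ] H1)) (x : WithLp 2 (H0 × H1)) :
    directSumAlgHom H0 H1 T x = WithLp.toLp 2 (T.1 x.fst, T.2 x.snd) :=
  rfl

/-- The shear `(x, y) ↦ (x + X y, y)`, which removes the off-diagonal part of `blockT2`. -/
def shear (X : H1 →L[ℂ] H0) : (WithLp 2 (H0 × H1) →L[ℂ] WithLp 2 (H0 × H1))ˣ :=
  let N : WithLp 2 (H0 × H1) →L[ℂ] WithLp 2 (H0 × H1) :=
    (WithLp.prodContinuousLinearEquiv 2 ℂ H0 H1).symm.conjContinuousAlgEquiv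
      ((ContinuousLinearMap.inl ℂ H0 H1).comp (X.comp (ContinuousLinearMap.snd ℂ H0 H1)))
  { val := 1 + N
    inv := 1 - N
    val_inv := by ext x; simp [N]
    inv_val := by ext x; simp [N] }

theorem isConj_directSumAlgHom_blockT2 (T0 : H0 →L[ℂ] H0) (T1 : H1 →L[ℂ] H1) (X : H1 →L[ℂ] H0) :
    IsConj (directSumAlgHom H0 H1 (T0, T1)) (blockT2 T0 T1 X) := by
  refine ⟨shear X, ?_⟩
  ext x
  simp [shear, directSumAlgHom_apply, blockT2, ← WithLp.toLp_add]

theorem WeaklyHomogeneousOp.blockT2 {T0 : H0 →L[ℂ] H0} {T1 : H1 →L[ℂ] H1}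
    (h0 : WeaklyHomogeneousOp T0) (h1 : WeaklyHomogeneousOp T1) (X : H1 →L[ℂ] H0) :
    WeaklyHomogeneousOp (blockT2 T0 T1 X) :=
  weaklyHomogeneousOp_iff.2 <|
    (((weaklyHomogeneousOp_iff.1 h0).prodMk (weaklyHomogeneousOp_iff.1 h1)).map
      (directSumAlgHom H0 H1)).of_isConj (isConj_directSumAlgHom_blockT2 T0 T1 X)

end BlockOperator

section Unitary

variable {R : Type*} [NormedRing R] [StarRing R] [CStarRing R] [NormedAlgebra ℂ R] [CompleteSpace R]

theorem spectrum_subset_closedBall_of_mem_unitary {u : R} (hu : u ∈ unitary R) :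
    spectrum ℂ u ⊆ closedBall 0 1 :=
  (spectrum.subset_circle_of_unitary hu).trans sphere_subset_closedBall

variable [StarModule ℂ R]

theorem mobius_mem_unitary {u : R} (hu : u ∈ unitary R) (θ : ℝ) {a : ℂ} (ha : ‖a‖ < 1) :
    mobius θ a u ∈ unitary R := by
  obtain ⟨Q, hQ⟩ := isUnit_one_sub_conj_smul (spectrum_subset_closedBall_of_mem_unitary hu) ha
  let U := Unitary.toUnits ⟨u, hu⟩
  have hU : star U * U = 1 := Units.ext (Unitary.star_mul_self_of_mem hu)
  have hQ_star : star (Q : R) = 1 - a • star u := by simp [hQ]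
  have hnormal : Commute (Q : R) (star (Q : R)) := by
    rw [hQ_star, hQ]
    exact (Commute.one_left _).sub_left <| (Commute.one_right _).sub_right <|
      ((commute_unitary_self_star hu).smul_left _).smul_right _
  have hnum : u - a • (1 : R) = ↑(U * star Q) := by
    rw [Units.val_mul, Units.coe_star, hQ_star, mul_sub, mul_one, mul_smul_comm]
    exact congrArg (u - a • ·) (Unitary.mul_star_self_of_mem hu).symm
  have hexp : exp (θ * I) ∈ unitary ℂ := by
    rw [Unitary.mem_iff_star_mul_self, RCLike.star_def, conj_mul', norm_exp_ofReal_mul_I,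
      ofReal_one, one_pow]
  rw [mobius, hnum, ← hQ, Ring.inverse_unit]
  refine Unitary.smul_mem_of_mem hexp ((Units.mul_inv_mem_unitary _ _).2 ?_)
  rw [star_mul, star_star, mul_assoc, ← mul_assoc (star U), hU, one_mul]
  exact Units.ext hnormal

end Unitary

section InvariantSubspace

open Module.End

variable {E : Type*} [NormedAddCommGroup E] [NormedSpace ℂ E]

theorem topologicalClosure_mem_invtSubmodule {A : E →L[ℂ] E} {K : Submodule ℂ E}
    (hK : K ∈ invtSubmodule A.toLinearMap) : K.topologicalClosure ∈ invtSubmodule A.toLinearMap :=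
  Set.MapsTo.closure hK A.continuous

theorem span_mem_invtSubmodule {A : E →ₗ[ℂ] E} {s : Set E} (h : Set.MapsTo A s s) :
    Submodule.span ℂ s ∈ invtSubmodule A :=
  Submodule.span_le.2 fun _ hx => Submodule.subset_span (h hx)

variable [CompleteSpace E]

theorem mem_invtSubmodule_inverse_one_sub {A : E →L[ℂ] E} (hA : ‖A‖ < 1) {K : Submodule ℂ E}
    (hclosed : IsClosed (K : Set E)) (hK : K ∈ invtSubmodule A.toLinearMap) :
    K ∈ invtSubmodule (Ring.inverse (1 - A)).toLinearMap := by
  intro x hx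
  have hpow (n : ℕ) : (A ^ n) x ∈ K := by
    induction n with
    | zero => simpa
    | succ n ih => rw [pow_succ']; exact hK ih
  have hsum : HasSum (fun n : ℕ => (A ^ n) x) (Ring.inverse (1 - A) x) := by
    rw [NormedRing.inverse_one_sub A hA]
    exact (summable_geometric_of_norm_lt_one hA).hasSum.mapL (ContinuousLinearMap.apply ℂ E x)
  exact hclosed.mem_of_tendsto hsum (.of_forall fun s => K.sum_mem fun n _ => hpow n)

theorem mem_invtSubmodule_inverse_one_sub_conj_smul {A : E →L[ℂ] E} (hA : ‖A‖ ≤ 1) {a : ℂ}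
    (ha : ‖a‖ < 1) {K : Submodule ℂ E} (hclosed : IsClosed (K : Set E))
    (hK : K ∈ invtSubmodule A.toLinearMap) :
    K ∈ invtSubmodule (Ring.inverse (1 - (starRingEnd ℂ) a • A)).toLinearMap := by
  refine mem_invtSubmodule_inverse_one_sub ?_ hclosed fun _ hx => K.smul_mem _ (hK hx)
  rw [norm_smul, RCLike.norm_conj]
  exact (mul_le_of_le_one_right (norm_nonneg a) hA).trans_lt ha

theorem mem_invtSubmodule_mobius {A : E →L[ℂ] E} (hA : ‖A‖ ≤ 1) {a : ℂ} (ha : ‖a‖ < 1) (θ : ℝ)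
    {K : Submodule ℂ E} (hclosed : IsClosed (K : Set E)) (hK : K ∈ invtSubmodule A.toLinearMap) :
    K ∈ invtSubmodule (mobius θ a A).toLinearMap := fun _ hx =>
  have hinv := mem_invtSubmodule_inverse_one_sub_conj_smul hA ha hclosed hK hx
  K.smul_mem _ (K.sub_mem (hK hinv) (K.smul_mem _ hinv))

end InvariantSubspace

section BilateralShift

open Module.End ContinuousLinearMap

variable {E : Type*} [NormedAddCommGroup E] [InnerProductSpace ℂ E] [CompleteSpace E]

/-- The unitary operator `U` is a bilateral shift generated by `e`: the nonzero vector `e` lies in a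
closed `U`-invariant subspace orthogonal to `U* e` (so that the vectors `Uⁿ e` are pairwise
orthogonal), but in no proper closed subspace reducing `U`. -/
structure IsBilateralShift (U : E →L[ℂ] E) (e : E) : Prop where
  mem_unitary : U ∈ unitary (E →L[ℂ] E)
  ne_zero : e ≠ 0
  exists_outgoing : ∃ K ∈ invtSubmodule U.toLinearMap, IsClosed (K : Set E) ∧ e ∈ K ∧
    adjoint U e ∈ Kᗮ
  eq_top : ∀ K ∈ invtSubmodule U.toLinearMap, K ∈ invtSubmodule (adjoint U).toLinearMap →
    IsClosed (K : Set E) → e ∈ K → K = ⊤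

theorem norm_le_one_of_mem_unitary {U : E →L[ℂ] E} (hU : U ∈ unitary (E →L[ℂ] E)) : ‖U‖ ≤ 1 :=
  U.opNorm_le_bound zero_le_one fun x => by rw [norm_map_of_mem_unitary hU, one_mul]

theorem mem_invtSubmodule_adjoint_mobius {U : E →L[ℂ] E} (hU : U ∈ unitary (E →L[ℂ] E)) {a : ℂ}
    (ha : ‖a‖ < 1) (θ : ℝ) {K : Submodule ℂ E} (hclosed : IsClosed (K : Set E))
    (hK : K ∈ invtSubmodule (adjoint U).toLinearMap) :
    K ∈ invtSubmodule (adjoint (mobius θ a U)).toLinearMap := by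
  have : CompleteSpace K := hclosed.completeSpace_coe
  rw [ContinuousLinearMap.mem_invtSubmodule_adjoint_iff] at hK ⊢
  exact mem_invtSubmodule_mobius (norm_le_one_of_mem_unitary hU) ha θ K.isClosed_orthogonal hK

namespace IsBilateralShift

variable {U V : E →L[ℂ] E} {e f : E}

protected theorem mobius (h : IsBilateralShift U e) (θ : ℝ) {a : ℂ} (ha : ‖a‖ < 1) :
    IsBilateralShift (mobius θ a U) (Ring.inverse (1 - (starRingEnd ℂ) a • U) e) := by
  have hU := norm_le_one_of_mem_unitary h.mem_unitary
  have hunit := isUnit_one_sub_conj_smul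
    (spectrum_subset_closedBall_of_mem_unitary h.mem_unitary) ha
  set Q := 1 - (starRingEnd ℂ) a • U with hQ
  set g := Ring.inverse Q e
  have hg : Q g = e := DFunLike.congr_fun (Ring.mul_inverse_cancel Q hunit) e
  refine ⟨mobius_mem_unitary h.mem_unitary θ ha, fun hg0 => h.ne_zero ?_, ?_, ?_⟩
  · rw [← hg, hg0, map_zero]
  · obtain ⟨K, hK, hclosed, he, he'⟩ := h.exists_outgoing
    have hinv := mem_invtSubmodule_inverse_one_sub_conj_smul hU ha hclosed hK
    refine ⟨K, mem_invtSubmodule_mobius hU ha θ hclosed hK, hclosed, hinv he, ?_⟩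
    have hVg : adjoint (_root_.mobius θ a U) g =
        (starRingEnd ℂ) (exp (θ * I)) • adjoint (Ring.inverse Q) (adjoint U e) := by
      have hUU : star U (U g) = g :=
        DFunLike.congr_fun (Unitary.star_mul_self_of_mem h.mem_unitary) g
      -- `(U − a)* = U* − conj(a) = U* (1 − conj(a) U)` because `U* U = 1`.
      rw [← hg]
      simp only [_root_.mobius, ← star_eq_adjoint, star_smul, RCLike.star_def, star_mul, star_sub,
        star_one, smul_apply, mul_apply_eq_comp, sub_apply, one_apply_eq_self, map_sub, map_smul,
        hQ]
      rw [hUU]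
    rw [hVg]
    refine Kᗮ.smul_mem _ (orthogonal_mem_invtSubmodule ?_ he')
    rwa [adjoint_adjoint]
  · intro K hK hK' hclosed hgK
    have ha' : ‖-(exp (θ * I) * a)‖ < 1 := by
      rwa [norm_neg, norm_mul, norm_exp_ofReal_mul_I, one_mul]
    have hV := mobius_mem_unitary h.mem_unitary θ ha
    have hKU := mem_invtSubmodule_mobius (norm_le_one_of_mem_unitary hV) ha' (-θ) hclosed hK
    have hKU' := mem_invtSubmodule_adjoint_mobius hV ha' (-θ) hclosed hK'
    rw [mobius_neg_mobius ha hunit] at hKU hKU'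
    refine h.eq_top K hKU hKU' hclosed (hg ▸ ?_)
    exact K.sub_mem hgK (K.smul_mem _ (hKU hgK))

theorem inner_pow_succ_apply (h : IsBilateralShift U e) (n : ℕ) :
    inner ℂ ((U ^ (n + 1)) e) e = 0 := by
  obtain ⟨K, hK, -, he, he'⟩ := h.exists_outgoing
  have hpow : (U ^ n) e ∈ K := by
    induction n with
    | zero => simpa
    | succ n ih => rw [pow_succ']; exact hK ih
  rw [pow_succ', mul_apply_eq_comp, ← adjoint_inner_right]
  exact he' _ hpow

theorem inner_zpow_apply_eq_zero {u : unitary (E →L[ℂ] E)} (h : IsBilateralShift (u : E →L[ℂ] E) e)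
    {m n : ℤ} (hmn : m ≠ n) :
    inner ℂ (((u ^ m : unitary (E →L[ℂ] E)) : E →L[ℂ] E) e)
      (((u ^ n : unitary (E →L[ℂ] E)) : E →L[ℂ] E) e) = 0 := by
  wlog hlt : n < m generalizing m n
  · rw [inner_eq_zero_symm]
    exact this hmn.symm (hmn.lt_of_le (not_lt.1 hlt))
  obtain ⟨k, rfl⟩ := Int.lt.dest hlt
  rw [zpow_add, zpow_natCast, Submonoid.coe_mul, mul_apply_eq_comp,
    inner_map_map_of_mem_unitary (u ^ n).2, SubmonoidClass.coe_pow, h.inner_pow_succ_apply]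

theorem exists_hilbertBasis (h : IsBilateralShift U e) :
    ∃ b : HilbertBasis ℤ ℂ E, ∀ n, U (b n) = b (n + 1) := by
  let u : unitary (E →L[ℂ] E) := ⟨U, h.mem_unitary⟩
  let v (n : ℤ) : E := ((u ^ n : unitary (E →L[ℂ] E)) : E →L[ℂ] E) ((‖e‖⁻¹ : ℂ) • e)
  have hv_succ (n : ℤ) : U (v n) = v (n + 1) := by
    simp only [v, add_comm n, zpow_add, zpow_one]
    rfl
  have hv_pred (n : ℤ) : adjoint U (v n) = v (n - 1) := by
    simp only [v, sub_eq_neg_add n, zpow_add, zpow_neg_one, ← Unitary.star_eq_inv]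
    rfl
  have hspan : (Submodule.span ℂ (Set.range v)).topologicalClosure = ⊤ := by
    refine h.eq_top _ (topologicalClosure_mem_invtSubmodule (span_mem_invtSubmodule ?_))
      (topologicalClosure_mem_invtSubmodule (span_mem_invtSubmodule ?_))
      (Submodule.isClosed_topologicalClosure _) (Submodule.le_topologicalClosure _ ?_)
    · rintro _ ⟨n, rfl⟩
      exact ⟨n + 1, (hv_succ n).symm⟩
    · rintro _ ⟨n, rfl⟩
      exact ⟨n - 1, (hv_pred n).symm⟩
    · have hmem : v 0 ∈ Submodule.span ℂ (Set.range v) := Submodule.subset_span ⟨0, rfl⟩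
      simpa [v, smul_smul, h.ne_zero] using Submodule.smul_mem _ (‖e‖ : ℂ) hmem
  have hortho : Orthonormal ℂ v := by
    refine ⟨fun n => ?_, fun m n hmn => ?_⟩
    · simp [v, norm_map_of_mem_unitary (u ^ n).2, norm_smul, h.ne_zero]
    · simp only [v, map_smul, inner_smul_left, inner_smul_right]
      rw [inner_zpow_apply_eq_zero (u := u) h hmn, mul_zero, mul_zero]
  exact ⟨.mk hortho hspan.ge, fun n => by rw [HilbertBasis.coe_mk, hv_succ]⟩

theorem isConj (hU : IsBilateralShift U e) (hV : IsBilateralShift V f) : IsConj U V := by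
  obtain ⟨b, hb⟩ := hU.exists_hilbertBasis
  obtain ⟨c, hc⟩ := hV.exists_hilbertBasis
  let S : E ≃L[ℂ] E := (b.repr.trans c.repr.symm).toContinuousLinearEquiv
  have hS (n : ℤ) : S (b n) = c n := by
    change c.repr.symm (b.repr (b n)) = c n
    rw [b.repr_self, c.repr_symm_single]
  refine ⟨S.toUnit, ContinuousLinearMap.ext_on (s := Set.range b) ?_ ?_⟩
  · exact Submodule.dense_iff_topologicalClosure_eq_top.2 b.dense_span
  · rintro _ ⟨n, rfl⟩
    change S (U (b n)) = V (S (b n))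
    rw [hb, hS, hS, hc]

theorem weaklyHomogeneousOp (h : IsBilateralShift U e) : WeaklyHomogeneousOp U :=
  ⟨spectrum_subset_closedBall_of_mem_unitary h.mem_unitary, fun θ _ ha => (h.mobius θ ha).isConj h⟩

end IsBilateralShift

end BilateralShift

section OrthonormalBasis

open ContinuousLinearMap

variable {ι E : Type*} [NormedAddCommGroup E] [InnerProductSpace ℂ E]

theorem hilbertBasis_ext_inner (b : HilbertBasis ι ℂ E) {x y : E}
    (h : ∀ i, inner ℂ (b i) x = inner ℂ (b i) y) : x = y :=
  b.repr.injective <| lp.ext <| funext fun i => by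
    rw [b.repr_apply_apply, b.repr_apply_apply, h i]

theorem hilbertBasis_ext_apply (b : HilbertBasis ι ℂ E) {F : Type*} [NormedAddCommGroup F]
    [NormedSpace ℂ F] {A B : E →L[ℂ] F} (h : ∀ i, A (b i) = B (b i)) : A = B :=
  ContinuousLinearMap.ext_on (Submodule.dense_iff_topologicalClosure_eq_top.2 b.dense_span) <| by
    rintro _ ⟨i, rfl⟩
    exact h i

variable [CompleteSpace E]

theorem adjoint_apply_eq_iff (b : HilbertBasis ι ℂ E) {A : E →L[ℂ] E} {x y : E} :
    adjoint A x = y ↔ ∀ i, inner ℂ (A (b i)) x = inner ℂ (b i) y := by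
  refine ⟨fun h i => ?_, fun h => hilbertBasis_ext_inner b fun i => ?_⟩
  · rw [← h, adjoint_inner_right]
  · rw [adjoint_inner_right, h]

end OrthonormalBasis

section WeightedShift

open Module.End ContinuousLinearMap

variable {E : Type*} [NormedAddCommGroup E] [InnerProductSpace ℂ E] [CompleteSpace E]
  {T : E →L[ℂ] E} {b : HilbertBasis ℤ ℂ E} {w : ℤ → ℂ}

theorem adjoint_weightedShift_apply (hT : ∀ n, T (b n) = w n • b (n + 1)) (n : ℤ) :
    adjoint T (b n) = (starRingEnd ℂ) (w (n - 1)) • b (n - 1) := by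
  refine (adjoint_apply_eq_iff b).2 fun m => ?_
  rw [hT, inner_smul_left, inner_smul_right, orthonormal_iff_ite.1 b.orthonormal,
    orthonormal_iff_ite.1 b.orthonormal]
  rcases eq_or_ne m (n - 1) with rfl | hm
  · simp
  · simp [hm, mt eq_sub_of_add_eq hm]

theorem weightedShift_mem_unitary (hw : ∀ n, ‖w n‖ = 1) (hT : ∀ n, T (b n) = w n • b (n + 1)) :
    T ∈ unitary (E →L[ℂ] E) := by
  have hconj (n : ℤ) : (starRingEnd ℂ) (w n) * w n = 1 := by
    rw [conj_mul', hw, ofReal_one, one_pow]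
  refine Unitary.mem_iff.2 ⟨hilbertBasis_ext_apply b fun n => ?_,
    hilbertBasis_ext_apply b fun n => ?_⟩
  · rw [mul_apply_eq_comp, hT, map_smul, star_eq_adjoint, adjoint_weightedShift_apply hT, smul_smul,
      add_sub_cancel_right, mul_comm, hconj, one_smul, one_apply_eq_self]
  · rw [mul_apply_eq_comp, star_eq_adjoint, adjoint_weightedShift_apply hT, map_smul, hT, smul_smul,
      sub_add_cancel, hconj, one_smul, one_apply_eq_self]

theorem IsBilateralShift.of_weightedShift (hw : ∀ n, ‖w n‖ = 1)
    (hT : ∀ n, T (b n) = w n • b (n + 1)) : IsBilateralShift T (b 0) := by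
  have hTstar := adjoint_weightedShift_apply hT
  have hw0 (n : ℤ) : w n ≠ 0 := norm_ne_zero_iff.1 (by simp [hw])
  refine ⟨weightedShift_mem_unitary hw hT, b.orthonormal.ne_zero 0, ?_, ?_⟩
  · let M := Submodule.span ℂ (b '' Set.Iio 0)
    have hM (n : ℤ) (hn : n ≤ 0) : adjoint T (b n) ∈ M := by
      rw [hTstar]
      exact M.smul_mem _ (Submodule.subset_span ⟨n - 1, Int.sub_one_lt_iff.2 hn, rfl⟩)
    refine ⟨Mᗮ, orthogonal_mem_invtSubmodule (Submodule.span_le.2 ?_), M.isClosed_orthogonal,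
      fun x hx => ?_, M.le_orthogonal_orthogonal (hM 0 le_rfl)⟩
    · rintro _ ⟨n, hn, rfl⟩
      exact hM n (le_of_lt hn)
    · have hle : M ≤ (ℂ ∙ b 0)ᗮ := Submodule.span_le.2 <| by
        rintro _ ⟨n, hn, rfl⟩
        exact Submodule.mem_orthogonal_singleton_iff_inner_right.2 (b.orthonormal.2 (ne_of_gt hn))
      exact Submodule.mem_orthogonal_singleton_iff_inner_left.1 (hle hx)
  · intro K hK hK' hclosed h0
    have hmem (n : ℤ) : b n ∈ K := by
      induction n with
      | zero => exact h0
      | succ n ih => exact (K.smul_mem_iff (hw0 n)).1 (hT n ▸ hK ih)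
      | pred n ih =>
        rw [← K.smul_mem_iff ((map_ne_zero (starRingEnd ℂ)).2 (hw0 (-n - 1))), ← hTstar]
        exact hK' ih
    rw [← hclosed.submodule_topologicalClosure_eq, eq_top_iff, ← b.dense_span]
    exact Submodule.topologicalClosure_mono (Submodule.span_le.2 (Set.range_subset_iff.2 hmem))

theorem weaklyHomogeneousOp_weightedShift (hw : ∀ n, ‖w n‖ = 1)
    (hT : ∀ n, T (b n) = w n • b (n + 1)) : WeaklyHomogeneousOp T :=
  (IsBilateralShift.of_weightedShift hw hT).weaklyHomogeneousOp

end WeightedShift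

section ProdHilbertBasis

variable {ι H0 H1 : Type*} [NormedAddCommGroup H0] [InnerProductSpace ℂ H0]
  [NormedAddCommGroup H1] [InnerProductSpace ℂ H1]

/-- The family `((pₙ, 0), (0, qₙ))` in the Hilbert sum `H0 ⊕ H1`, indexed so that the two vectors
with the same `n` form the `n`-th block. -/
def prodFamily (p : ι → H0) (q : ι → H1) (i : ι × Fin 2) : WithLp 2 (H0 × H1) :=
  WithLp.toLp 2 (![(p i.1, 0), (0, q i.1)] i.2)

theorem orthonormal_prodFamily {p : ι → H0} {q : ι → H1} (hp : Orthonormal ℂ p)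
    (hq : Orthonormal ℂ q) : Orthonormal ℂ (prodFamily p q) := by
  classical
  rw [orthonormal_iff_ite] at hp hq ⊢
  rintro ⟨i, k⟩ ⟨j, l⟩
  fin_cases k <;> fin_cases l <;> simp [prodFamily, WithLp.prod_inner_apply, hp, hq]

variable [CompleteSpace H0] [CompleteSpace H1]

/-- The Hilbert basis of `H0 ⊕ H1` whose vectors are given by `prodFamily`. -/
def prodHilbertBasis (p : HilbertBasis ι ℂ H0) (q : HilbertBasis ι ℂ H1) :
    HilbertBasis (ι × Fin 2) ℂ (WithLp 2 (H0 × H1)) :=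
  .mkOfOrthogonalEqBot (orthonormal_prodFamily p.orthonormal q.orthonormal) <| by
    refine (Submodule.eq_bot_iff _).2 fun x hx => ?_
    have hinner (i : ι × Fin 2) : inner ℂ (prodFamily p q i) x = 0 :=
      hx _ (Submodule.subset_span ⟨i, rfl⟩)
    have hfst : x.fst = 0 := hilbertBasis_ext_inner p fun i => by
      simpa [prodFamily, WithLp.prod_inner_apply] using hinner (i, 0)
    have hsnd : x.snd = 0 := hilbertBasis_ext_inner q fun i => by
      simpa [prodFamily, WithLp.prod_inner_apply] using hinner (i, 1)
    exact WithLp.ofLp_injective 2 (Prod.ext hfst hsnd)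

theorem prodHilbertBasis_zero (p : HilbertBasis ι ℂ H0) (q : HilbertBasis ι ℂ H1) (i : ι) :
    prodHilbertBasis p q (i, 0) = WithLp.toLp 2 (p i, 0) := by
  simp [prodHilbertBasis, prodFamily]

theorem prodHilbertBasis_one (p : HilbertBasis ι ℂ H0) (q : HilbertBasis ι ℂ H1) (i : ι) :
    prodHilbertBasis p q (i, 1) = WithLp.toLp 2 (0, q i) := by
  simp [prodHilbertBasis, prodFamily]

end ProdHilbertBasis

section Reducing

open ContinuousLinearMap

variable {E : Type*} [NormedAddCommGroup E] [InnerProductSpace ℂ E] [CompleteSpace E]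

theorem isIrreducibleOp_of_commute {A : E →L[ℂ] E}
    (h : ∀ P : E →L[ℂ] E, IsStarProjection P → Commute P A → ∃ c : ℂ, P = c • 1) :
    IsIrreducibleOp A := by
  intro K hclosed hA hA'
  have : CompleteSpace K := hclosed.completeSpace_coe
  have hcomm : Commute K.starProjection A := by
    rw [IsIdempotentElem.commute_iff K.isIdempotentElem_starProjection, K.range_starProjection,
      K.ker_starProjection]
    exact ⟨hA, mem_invtSubmodule_adjoint_iff.1 hA'⟩
  obtain ⟨c, hc⟩ := h _ isStarProjection_starProjection hcomm
  rw [← K.range_starProjection, hc]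
  rcases eq_or_ne c 0 with rfl | hc0
  · exact .inl (by simp)
  · exact .inr (LinearMap.range_eq_top.2 fun x => ⟨c⁻¹ • x, by simp [hc0]⟩)

end Reducing

section MatrixTwo

theorem mul_self_eq_trace_smul_sub_det_smul {R : Type*} [CommRing R] [Nontrivial R]
    (A : Matrix (Fin 2) (Fin 2) R) :
    A * A = A.trace • A - A.det • 1 := by
  have h := A.aeval_self_charpoly
  rw [Matrix.charpoly_fin_two] at h
  simp only [map_add, map_sub, map_mul, Polynomial.aeval_X, Polynomial.aeval_C,
    Algebra.algebraMap_eq_smul_one, smul_one_mul, pow_two] at h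
  rwa [sub_add, sub_eq_zero] at h

variable {K : Type*} [Field K] {A B M : Matrix (Fin 2) (Fin 2) K}

theorem eq_zero_of_mul_eq_mul_of_trace_ne (h : A * M = M * B) (hdet : A.det = B.det)
    (hA : A.det ≠ 0) (htrace : A.trace ≠ B.trace) : M = 0 := by
  have hAM : A.trace • (A * M) = B.trace • (A * M) := by
    have hsq : A * A * M = M * (B * B) := by rw [mul_assoc, h, ← mul_assoc, h, mul_assoc]
    rw [mul_self_eq_trace_smul_sub_det_smul A, mul_self_eq_trace_smul_sub_det_smul B, sub_mul,
      mul_sub, smul_mul_assoc, mul_smul_comm, smul_one_mul, mul_smul_comm, mul_one, hdet,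
      sub_left_inj] at hsq
    rw [hsq, h]
  rw [← sub_eq_zero, ← sub_smul, smul_eq_zero_iff_right (sub_ne_zero.2 htrace)] at hAM
  exact ((A.isUnit_iff_isUnit_det.2 hA.isUnit).mul_right_eq_zero).1 hAM

theorem exists_eq_smul_one_add_smul_of_commute (hM : ∀ c : K, M ≠ c • 1) (h : Commute M A) :
    ∃ s t : K, A = s • 1 + t • M := by
  have h00 := congrFun₂ h.eq 0 0
  have h01 := congrFun₂ h.eq 0 1
  have h10 := congrFun₂ h.eq 1 0
  simp only [Matrix.mul_apply, Fin.sum_univ_two] at h00 h01 h10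
  suffices ∃ t : K, A 0 1 = t * M 0 1 ∧ A 1 0 = t * M 1 0 ∧
      A 0 0 - A 1 1 = t * (M 0 0 - M 1 1) by
    obtain ⟨t, h1, h2, h3⟩ := this
    refine ⟨A 0 0 - t * M 0 0, t, ?_⟩
    ext k l
    fin_cases k <;> fin_cases l <;> simp <;> grind
  by_cases hM01 : M 0 1 = 0
  · by_cases hM10 : M 1 0 = 0
    · have hM00 : M 0 0 - M 1 1 ≠ 0 := by
        intro hd
        apply hM (M 0 0)
        ext k l
        fin_cases k <;> fin_cases l <;> simp <;> grind
      exact ⟨(A 0 0 - A 1 1) / (M 0 0 - M 1 1), by grind, by grind, by grind⟩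
    · exact ⟨A 1 0 / M 1 0, by grind, by grind, by grind⟩
  · exact ⟨A 0 1 / M 0 1, by grind, by grind, by grind⟩

theorem exists_eq_smul_one_of_commute (hA : Commute M A) (hB : Commute M B) (hAB : ¬Commute A B) :
    ∃ c : K, M = c • 1 := by
  by_contra! hM
  obtain ⟨s, t, rfl⟩ := exists_eq_smul_one_add_smul_of_commute hM hA
  exact hAB (((Commute.one_left B).smul_left s).add_left (hB.smul_left t))

end MatrixTwo

section BlockShift

open ContinuousLinearMap Matrix

variable {ι E : Type*} [NormedAddCommGroup E] [InnerProductSpace ℂ E]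

/-- The operator `A` is a block shift with weights `T n`: relative to the basis `e`, with
`e (n, ·)` spanning the `n`-th block, it maps block `n` to block `n + 1` by the matrix `T n`. -/
def IsBlockShift [Fintype ι] (e : HilbertBasis (ℤ × ι) ℂ E) (T : ℤ → Matrix ι ι ℂ)
    (A : E →L[ℂ] E) : Prop :=
  ∀ n k, A (e (n, k)) = ∑ l, T n l k • e (n + 1, l)

/-- The `(i, j)` block of the matrix of `P` relative to the basis `e`. -/
def block {κ : Type*} (e : HilbertBasis (κ × ι) ℂ E) (P : E →L[ℂ] E) (i j : κ) : Matrix ι ι ℂ :=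
  .of fun k l => inner ℂ (e (i, k)) (P (e (j, l)))

section Block

variable {κ : Type*} (e : HilbertBasis (κ × ι) ℂ E) (P Q : E →L[ℂ] E) (i j : κ)

theorem block_sub : block e (P - Q) i j = block e P i j - block e Q i j := by
  ext k l
  exact inner_sub_right _ _ _

theorem block_smul_one [DecidableEq κ] [DecidableEq ι] (c : ℂ) :
    block e (c • 1) i j = if i = j then c • 1 else 0 := by
  ext k l
  have hite := orthonormal_iff_ite.1 e.orthonormal (i, k) (j, l)
  rcases eq_or_ne i j with rfl | hij
  · simp [block, hite, Matrix.one_apply]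
  · simp [block, hite, hij]

theorem conjTranspose_block [CompleteSpace E] :
    (block e P i j)ᴴ = block e (adjoint P) j i := by
  ext k l
  simp [block, adjoint_inner_right]

variable {e P}

theorem eq_zero_of_block (h : ∀ i j, block e P i j = 0) : P = 0 :=
  hilbertBasis_ext_apply e fun ⟨j, l⟩ => hilbertBasis_ext_inner e fun ⟨i, k⟩ =>
    (congrFun₂ (h i j) k l).trans (inner_zero_right _).symm

end Block

variable [CompleteSpace E]

namespace IsBlockShift

variable [Fintype ι] {e : HilbertBasis (ℤ × ι) ℂ E} {T : ℤ → Matrix ι ι ℂ} {A P : E →L[ℂ] E}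

theorem adjoint_apply (hA : IsBlockShift e T A) (n : ℤ) (k : ι) :
    adjoint A (e (n + 1, k)) = ∑ l, star (T n k l) • e (n, l) := by
  classical
  refine (adjoint_apply_eq_iff e).2 fun ⟨m, l⟩ => ?_
  simp only [hA m l, sum_inner, inner_sum, inner_smul_left, inner_smul_right,
    orthonormal_iff_ite.1 e.orthonormal]
  rcases eq_or_ne m n with rfl | hmn
  · simp
  · simp [hmn]

theorem block_mul (hA : IsBlockShift e T A) (hP : Commute P A) (i j : ℤ) :
    block e P (i + 1) (j + 1) * T j = T i * block e P i j := by
  ext k l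
  have hPA : P (A (e (j, l))) = A (P (e (j, l))) := DFunLike.congr_fun hP.eq _
  calc ∑ m, inner ℂ (e (i + 1, k)) (P (e (j + 1, m))) * T j m l
      = inner ℂ (e (i + 1, k)) (P (A (e (j, l)))) := by
        simp [hA j l, mul_comm]
    _ = ∑ m, T i k m * inner ℂ (e (i, m)) (P (e (j, l))) := by
        simp [hPA, ← adjoint_inner_left, hA.adjoint_apply, sum_inner, inner_smul_left]

theorem conjTranspose_mul_block (hA : IsBlockShift e T A) (hP : IsSelfAdjoint P)
    (hPA : Commute P A) (i j : ℤ) :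
    (T i)ᴴ * block e P (i + 1) (j + 1) = block e P i j * (T j)ᴴ := by
  have h := congrArg conjTranspose (hA.block_mul hPA j i)
  simpa only [conjTranspose_mul, conjTranspose_block, hP.adjoint_eq] using h

theorem conjTranspose_mul_self_mul_block (hA : IsBlockShift e T A) (hP : IsSelfAdjoint P)
    (hPA : Commute P A) (i j : ℤ) :
    (T i)ᴴ * T i * block e P i j = block e P i j * ((T j)ᴴ * T j) := by
  rw [Matrix.mul_assoc, ← hA.block_mul hPA, ← Matrix.mul_assoc, hA.conjTranspose_mul_block hP hPA,
    Matrix.mul_assoc]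

theorem mul_conjTranspose_mul_block (hA : IsBlockShift e T A) (hP : IsSelfAdjoint P)
    (hPA : Commute P A) (i j : ℤ) :
    T i * (T i)ᴴ * block e P (i + 1) (j + 1) = block e P (i + 1) (j + 1) * (T j * (T j)ᴴ) := by
  rw [Matrix.mul_assoc, hA.conjTranspose_mul_block hP hPA, ← Matrix.mul_assoc,
    ← hA.block_mul hPA, Matrix.mul_assoc]

theorem block_eq_zero_of_sub_eq_sub [DecidableEq ι] (hA : IsBlockShift e T A)
    (hT : ∀ n, IsUnit (T n)) (hPA : Commute P A) {i j i' j' : ℤ} (h : block e P i j = 0)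
    (hsub : i' - i = j' - j) : block e P i' j' = 0 := by
  have hstep (m n : ℤ) : block e P (m + 1) (n + 1) = 0 ↔ block e P m n = 0 := by
    rw [← (hT n).mul_left_eq_zero, hA.block_mul hPA, (hT m).mul_right_eq_zero]
  have hshift (k : ℤ) : block e P (i + k) (j + k) = 0 := by
    induction k with
    | zero => simpa
    | succ k ih => rwa [← add_assoc, ← add_assoc, hstep]
    | pred k ih => rwa [← hstep, add_assoc, add_assoc, sub_add_cancel]
  have h' := hshift (i' - i)
  rwa [add_sub_cancel, hsub, add_sub_cancel] at h'

theorem isIrreducibleOp {T : ℤ → Matrix (Fin 2) (Fin 2) ℂ} {e : HilbertBasis (ℤ × Fin 2) ℂ E}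
    (hA : IsBlockShift e T A) (hdet : ∀ n, ‖(T n).det‖ = 1)
    (htrace : ∀ k ≠ 0, ¬Function.Periodic (fun n => ((T n)ᴴ * T n).trace) k)
    (hcomm : ∃ n, ¬Commute ((T (n + 1))ᴴ * T (n + 1)) (T n * (T n)ᴴ)) : IsIrreducibleOp A := by
  refine isIrreducibleOp_of_commute fun P hP hPA => ?_
  have hPsa := hP.isSelfAdjoint
  have hdet' (n : ℤ) : ((T n)ᴴ * T n).det = 1 := by
    rw [det_mul, det_conjTranspose, RCLike.star_def, conj_mul', hdet, ofReal_one, one_pow]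
  have hT (n : ℤ) : IsUnit (T n) :=
    (T n).isUnit_iff_isUnit_det.2 (norm_ne_zero_iff.1 (by simp [hdet])).isUnit
  obtain ⟨n, hn⟩ := hcomm
  obtain ⟨c, hc⟩ : ∃ c : ℂ, block e P (n + 1) (n + 1) = c • 1 := exists_eq_smul_one_of_commute
    (hA.conjTranspose_mul_self_mul_block hPsa hPA _ _).symm
    (hA.mul_conjTranspose_mul_block hPsa hPA n n).symm hn
  have hdiag (i : ℤ) : block e (P - c • 1) i i = 0 := by
    refine hA.block_eq_zero_of_sub_eq_sub hT (hPA.sub_left ((Commute.one_left A).smul_left c))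
      (i := n + 1) (j := n + 1) ?_ rfl
    rw [block_sub, hc, block_smul_one, if_pos rfl, sub_self]
  have hoff {i j : ℤ} (hij : i ≠ j) : block e P i j = 0 := by
    obtain ⟨m, hm⟩ := not_forall.1 (htrace (j - i) (sub_ne_zero.2 hij.symm))
    refine hA.block_eq_zero_of_sub_eq_sub hT hPA (i := m) (j := m + (j - i)) ?_ (by ring)
    exact eq_zero_of_mul_eq_mul_of_trace_ne (hA.conjTranspose_mul_self_mul_block hPsa hPA _ _)
      ((hdet' _).trans (hdet' _).symm) (by simp [hdet']) (Ne.symm hm)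
  refine ⟨c, sub_eq_zero.1 (eq_zero_of_block (e := e) fun i j => ?_)⟩
  rcases eq_or_ne i j with rfl | hij
  · exact hdiag i
  · rw [block_sub, hoff hij, block_smul_one, if_neg hij, sub_zero]

end IsBlockShift

end BlockShift

section TwoByTwo

open Matrix

theorem trace_conjTranspose_mul_self_upperTriangular (a b c : ℂ) :
    ((!![a, b; 0, c])ᴴ * !![a, b; 0, c]).trace = ((‖a‖ ^ 2 + ‖b‖ ^ 2 + ‖c‖ ^ 2 : ℝ) : ℂ) := by
  simp [trace_fin_two, Matrix.mul_apply, conj_mul', add_assoc]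

theorem not_commute_upperTriangular {a b c a' b' c' : ℂ} (ha : ‖a‖ = 1) (hc : ‖c‖ = 1)
    (ha' : ‖a'‖ = 1) (hc' : ‖c'‖ = 1) (hb : b ≠ 0) (hb' : b' ≠ 0) (hbb' : ‖b‖ ≠ ‖b'‖) :
    ¬Commute ((!![a', b'; 0, c'])ᴴ * !![a', b'; 0, c']) (!![a, b; 0, c] * (!![a, b; 0, c])ᴴ) := by
  intro h
  have hentry : (‖b‖ ^ 2 : ℂ) * ((starRingEnd ℂ) a' * b') =
      -((‖b'‖ ^ 2 : ℂ) * (b * (starRingEnd ℂ) c)) := by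
    have h01 := congrFun₂ h.eq 0 1
    simp only [Matrix.mul_apply, Fin.sum_univ_two, conjTranspose_apply, of_apply, cons_val',
      cons_val_zero, cons_val_one, cons_val_fin_one, RCLike.star_def, conj_mul', mul_conj', ha, hc,
      ha', hc', map_zero] at h01
    linear_combination -h01
  have hnorm : ‖b‖ ^ 2 * ‖b'‖ = ‖b'‖ ^ 2 * ‖b‖ := by
    simpa [ha', hc] using congrArg norm hentry
  refine hbb' (mul_left_cancel₀ (mul_ne_zero (norm_ne_zero_iff.2 hb) (norm_ne_zero_iff.2 hb')) ?_)
  linear_combination hnorm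

end TwoByTwo

section BlockOperatorShift

variable {H0 H1 : Type*} [NormedAddCommGroup H0] [InnerProductSpace ℂ H0] [CompleteSpace H0]
  [NormedAddCommGroup H1] [InnerProductSpace ℂ H1] [CompleteSpace H1]
  {p : HilbertBasis ℤ ℂ H0} {q : HilbertBasis ℤ ℂ H1} {T0 : H0 →L[ℂ] H0} {T1 : H1 →L[ℂ] H1}
  {X : H1 →L[ℂ] H0} {w v d : ℤ → ℂ}

theorem isBlockShift_blockT2 (hT0 : ∀ n, T0 (p n) = w n • p (n + 1))
    (hT1 : ∀ n, T1 (q n) = v n • q (n + 1)) (hX : ∀ n, X (q n) = d n • p n) :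
    IsBlockShift (prodHilbertBasis p q)
      (fun n => !![w n, d (n + 1) * v n - d n * w n; 0, v n]) (blockT2 T0 T1 X) := by
  intro n k
  rw [Fin.sum_univ_two, prodHilbertBasis_zero, prodHilbertBasis_one]
  apply WithLp.ofLp_injective
  fin_cases k
  · simp [prodHilbertBasis_zero, blockT2, hT0]
  · simp [prodHilbertBasis_one, blockT2, hT0, hT1, hX, sub_smul, smul_smul, mul_comm]

theorem isIrreducibleOp_blockT2 (hw : ∀ n, ‖w n‖ = 1) (hv : ∀ n, ‖v n‖ = 1)
    (hT0 : ∀ n, T0 (p n) = w n • p (n + 1)) (hT1 : ∀ n, T1 (q n) = v n • q (n + 1))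
    (hX : ∀ n, X (q n) = d n • p n) (hper : ∀ k ≠ 0, ¬Function.Periodic (sqSeq w v d) k)
    (hadj : ∃ n, sqSeq w v d n ≠ 0 ∧ sqSeq w v d (n + 1) ≠ 0 ∧
      sqSeq w v d n ≠ sqSeq w v d (n + 1)) :
    IsIrreducibleOp (blockT2 T0 T1 X) := by
  refine (isBlockShift_blockT2 hT0 hT1 hX).isIrreducibleOp (fun n => ?_) (fun k hk hT => ?_) ?_
  · rw [Matrix.det_fin_two_of, mul_zero, sub_zero, norm_mul, hw, hv, one_mul]
  · refine hper k hk fun n => ?_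
    have := hT n
    simp only [trace_conjTranspose_mul_self_upperTriangular, hw, hv, ofReal_inj] at this
    exact add_left_cancel (add_right_cancel this)
  · obtain ⟨n, hn, hn', hne⟩ := hadj
    refine ⟨n, not_commute_upperTriangular (hw n) (hv n) (hw _) (hv _) ?_ ?_ ?_⟩
    · exact fun h => hn (by simp [sqSeq, h])
    · exact fun h => hn' (by simp [sqSeq, h])
    · exact fun h => hne (congrArg (· ^ 2) h)

end BlockOperatorShift

section EventuallyInjective

theorem not_periodic_of_injOn_Ioi {α : Type*} {f : ℤ → α} {N : ℤ} (hf : Set.InjOn f (Set.Ioi N))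
    {k : ℤ} (hk : k ≠ 0) : ¬Function.Periodic f k := by
  intro h
  have habs : Function.Periodic f |k| := abs_by_cases (Function.Periodic f) h h.neg
  have hpos := abs_pos.2 hk
  have := hf (lt_add_one N) (Set.mem_Ioi.2 (by linarith)) (habs (N + 1)).symm
  linarith

theorem exists_ne_ne_of_injOn_Ioi {α : Type*} {f : ℤ → α} {N : ℤ} (hf : Set.InjOn f (Set.Ioi N))
    (a : α) : ∃ n, f n ≠ a ∧ f (n + 1) ≠ a ∧ f n ≠ f (n + 1) := by
  have hne {m n : ℤ} (hm : N < m) (hmn : m < n) : f m ≠ f n :=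
    fun h => hmn.ne (hf hm (hm.trans hmn) h)
  by_cases h : f (N + 1) = a ∨ f (N + 2) = a
  · refine ⟨N + 3, ?_, ?_, hne (by lia) (by lia)⟩ <;>
      rcases h with rfl | rfl <;> exact (hne (by lia) (by lia)).symm
  · rw [not_or] at h
    exact ⟨N + 1, h.1, by simpa [add_assoc] using h.2, hne (by lia) (by lia)⟩

end EventuallyInjective

theorem irreducible_weaklyHomogeneous_of_T_w_v_d_general
    {H0 H1 : Type*} [NormedAddCommGroup H0] [InnerProductSpace ℂ H0] [CompleteSpace H0]
    [NormedAddCommGroup H1] [InnerProductSpace ℂ H1] [CompleteSpace H1]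
    (p : HilbertBasis ℤ ℂ H0) (q : HilbertBasis ℤ ℂ H1) {w v d : ℤ → ℂ}
    (hw : ∀ n, ‖w n‖ = 1) (hv : ∀ n, ‖v n‖ = 1)
    {T0 : H0 →L[ℂ] H0} {T1 : H1 →L[ℂ] H1} {X : H1 →L[ℂ] H0}
    (hT0 : ∀ n, T0 (p n) = w n • p (n + 1)) (hT1 : ∀ n, T1 (q n) = v n • q (n + 1))
    (hX : ∀ n, X (q n) = d n • p n) {N : ℤ} (hinj : Set.InjOn (sqSeq w v d) (Set.Ioi N)) :
    IsIrreducibleOp (blockT2 T0 T1 X) ∧ WeaklyHomogeneousOp (blockT2 T0 T1 X) :=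
  ⟨isIrreducibleOp_blockT2 hw hv hT0 hT1 hX (fun _ => not_periodic_of_injOn_Ioi hinj)
      (exists_ne_ne_of_injOn_Ioi hinj 0),
    (weaklyHomogeneousOp_weightedShift hw hT0).blockT2 (weaklyHomogeneousOp_weightedShift hv hT1) X⟩

/-- The standard basis `eb` of `ℓ²(ℤ)` as a Hilbert basis. -/
def ebHilbertBasis : HilbertBasis ℤ ℂ Hl :=
  .ofRepr (LinearIsometryEquiv.refl ℂ Hl)

theorem ebHilbertBasis_apply (n : ℤ) : ebHilbertBasis n = eb n :=
  (ebHilbertBasis.repr_symm_single n).symm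

/-- Theorem 4.11: `T(wₙ, vₙ, dₙ)` with unimodular weights is irreducible and weakly
homogeneous. -/
theorem irreducible_weaklyHomogeneous_of_T_w_v_d
    (w v : ℤ → ℂ) (hw : ∀ n, ‖w n‖ = 1) (hv : ∀ n, ‖v n‖ = 1)
    (d : ℤ → ℂ) (hdb : ∃ C : ℝ, ∀ n, ‖d n‖ ≤ C)
    (T0 T1 X : Hl →L[ℂ] Hl)
    (hT0 : ∀ n : ℤ, T0 (eb n) = w n • eb (n + 1))
    (hT1 : ∀ n : ℤ, T1 (eb n) = v n • eb (n + 1))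
    (hX : ∀ n : ℤ, X (eb n) = d n • eb n)
    (hXT : X.comp T1 ≠ T0.comp X)
    (hg : ∃ g : ℤ ≃ ℤ, ∃ N : ℤ,
      (∀ m n : ℤ, N < m → N < n → sqSeq w v d m = sqSeq w v d n → m = n) ∧
      (∀ n : ℤ, sqSeq w v d n = sqSeq w v d (g n)))
    (hcond : ∀ n : ℤ,
      (¬ ∃ r : ℝ, d (n + 1) * cSeq' w v d n + d n * cSeq' w v d (n - 1) -
          d (n + 1) * starRingEnd ℂ (w n) * v n * cSeq' w v d (n - 1) = (r : ℂ)) ∨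
      (starRingEnd ℂ (d (n + 1)) * w n * v n - starRingEnd ℂ (d n)) *
          ((sqSeq w v d (n - 1) : ℝ) : ℂ) ≠
        (starRingEnd ℂ (d (n - 1)) * starRingEnd ℂ (w (n - 1)) * v (n - 1) -
            starRingEnd ℂ (d n)) * ((sqSeq w v d n : ℝ) : ℂ)) :
    IsIrreducibleOp (blockT T0 T1 X) ∧ WeaklyHomogeneousOp (blockT T0 T1 X) := by
  obtain ⟨-, N, hinj, -⟩ := hg
  simp_rw [← ebHilbertBasis_apply] at hT0 hT1 hX
  exact irreducible_weaklyHomogeneous_of_T_w_v_d_general _ _ hw hv hT0 hT1 hX (N := N)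
    fun m hm n hn => hinj m n hm hn
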